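/- arXiv:1708.09800 — 4 statements merged into one kernel-verified Lean document; each statement's English description precedes it below -/
import Mathlib

section
/- Let L be a totally ordered normal incline, let n ≥ 4, and let A be an n×n completely positive matrix over L. Then A has a ⌊n²/4⌋-term support-3 rank-1 CP-representation: there exist k ≤ ⌊n²/4⌋ and an n×k matrix B over L such that A = B * Bᵀ and every column of B has at most 3 nonzero entries. -/
open Matrix

/-! Addition is supremum, so `d i = ∑ k, B i k` is the largest entry of row `i` of `B`, and dividing
row `i` and column `i` of `B * Bᵀ` by `d i` leaves a symmetric matrix `Z` with unit diagonal.
It then suffices to find few vectors `x` of support at most three with `x i * x j ≤ Z i j`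
everywhere, such that each entry is attained by one of them. Row `c` of `Z` cut down to `{c, a, b}`
is such a vector as soon as `Z c a * Z c b ≤ Z a b`, and it attains the entries of that row.

Let `Z u v` be the largest off-diagonal entry of a block of size `n`. For each further index `k`,
row `k` cut down to `{k, u, v}` works. Fix one further index `w`, with `Z u w ≤ Z v w` after
exchanging `u` and `v` if necessary. Replacing the vector of `w` by row `u` on `{u, v, w}` and
row `v` on `{v, w}` settles rows `u` and `v` and every diagonal entry except `(w, w)` with `n - 1`
vectors. Deleting `u` and `v` and recursing takes `n² / 4` vectors and misses a single diagonal
entry `(k, k)`; for `n ≥ 4` the choice `w ≠ k` in the first round settles that entry as well. -/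

namespace InclineCP

variable {ι κ L : Type*}

/-- `A` has a support-`t` rank-1 CP-representation with at most `m` terms, one for each column
of `B`. -/
def HasSparseCPRep [CommSemiring L] (t m : ℕ) (A : Matrix ι ι L) : Prop :=
  ∃ k ≤ m, ∃ B : Matrix ι (Fin k) L, A = B * Bᵀ ∧ ∀ j, {i | B i j ≠ 0}.ncard ≤ t

theorem HasSparseCPRep.diagonal_mul_mul_diagonal [CommSemiring L] [Fintype ι] [DecidableEq ι]
    {t m : ℕ} {A : Matrix ι ι L} (hA : HasSparseCPRep t m A) (d : ι → L) :
    HasSparseCPRep t m (diagonal d * A * diagonal d) := by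
  obtain ⟨k, hk, B, rfl, hB⟩ := hA
  refine ⟨k, hk, diagonal d * B, ?_, fun j => (Set.ncard_le_ncard fun i hi => ?_).trans (hB j)⟩
  · simp only [transpose_mul, diagonal_transpose, Matrix.mul_assoc]
  · exact right_ne_zero_of_mul (by simpa only [Set.mem_ofPred_eq, diagonal_mul] using hi)

section Sum

variable [IdemCommSemiring L]

theorem sum_le_of_forall_le {s : Finset κ} {f : κ → L} {a : L} (h : ∀ k ∈ s, f k ≤ a) :
    ∑ k ∈ s, f k ≤ a :=
  Finset.sum_induction f (· ≤ a) (fun _ _ => add_le) zero_le h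

theorem sum_mul_self [@Std.Total L (· ≤ ·)] (s : Finset κ) (f : κ → L) :
    (∑ k ∈ s, f k) * ∑ k ∈ s, f k = ∑ k ∈ s, f k * f k := by
  have le_sum {g : κ → L} {k : κ} (hk : k ∈ s) : g k ≤ ∑ k ∈ s, g k :=
    Finset.single_le_sum_of_canonicallyOrdered hk
  refine le_antisymm ?_ (sum_le_of_forall_le fun k hk => mul_le_mul' (le_sum hk) (le_sum hk))
  rw [Finset.sum_mul_sum]
  refine sum_le_of_forall_le fun k hk => sum_le_of_forall_le fun l hl => ?_
  rcases total_of (· ≤ ·) (f k) (f l) with h | h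
  · exact (mul_le_mul_left h _).trans (le_sum (g := fun k => f k * f k) hl)
  · exact (mul_le_mul_right h _).trans (le_sum (g := fun k => f k * f k) hk)

end Sum

/-- A symmetric matrix with unit diagonal: the shape of a completely positive matrix after
normalization of its diagonal. -/
structure IsCorrelation [One L] (Z : Matrix ι ι L) : Prop where
  symm : Z.IsSymm
  diag (i : ι) : Z i i = 1

theorem exists_isCorrelation_mul_transpose_eq [IdemCommSemiring L] [@Std.Total L (· ≤ ·)]
    (dvd_of_le : ∀ x y : L, x ≤ y → y ∣ x) [Fintype ι] [DecidableEq ι] [Fintype κ]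
    (B : Matrix ι κ L) :
    ∃ (d : ι → L) (Z : Matrix ι ι L), IsCorrelation Z ∧ B * Bᵀ = diagonal d * Z * diagonal d := by
  let d i := ∑ k, B i k
  have le_d i k : B i k ≤ d i := Finset.single_le_sum_of_canonicallyOrdered (Finset.mem_univ k)
  have exists_quotient i j : ∃ z, (B * Bᵀ) i j = d i * d j * z ∧ (i = j → z = 1) := by
    rcases eq_or_ne i j with rfl | hij
    · exact ⟨1, by simp only [mul_apply, transpose_apply, mul_one, d, sum_mul_self], fun _ => rfl⟩
    · have entry_le : (B * Bᵀ) i j ≤ d i * d j :=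
        sum_le_of_forall_le fun k _ => mul_le_mul' (le_d i k) (le_d j k)
      obtain ⟨z, hz⟩ := dvd_of_le _ _ entry_le
      exact ⟨z, hz, fun h => absurd h hij⟩
  choose z hz z_diag using exists_quotient
  -- The quotients need not be unique, so the chosen ones are symmetrized.
  refine ⟨d, of fun i j => z i j + z j i, ⟨?_, ?_⟩, ?_⟩
  · ext i j
    exact add_comm _ _
  · intro i
    rw [of_apply, z_diag i i rfl, add_idem]
  · ext i j
    have symm : (B * Bᵀ).IsSymm := by rw [Matrix.IsSymm, transpose_mul, transpose_transpose]
    calc (B * Bᵀ) i j = d i * d j * z i j + d j * d i * z j i := by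
          rw [← hz, ← hz, symm.apply i j, add_idem]
      _ = (diagonal d * of (fun i j => z i j + z j i) * diagonal d) i j := by
          rw [mul_diagonal, diagonal_mul, of_apply]
          ring

/-- The vector `x` has at most `t` nonzero entries, and its rank-one matrix lies entrywise
below `Z`. -/
structure IsSparseMinorant [MulZeroClass L] [LE L] (t : ℕ) (Z : Matrix ι ι L) (x : ι → L) :
    Prop where
  mul_le (i j : ι) : x i * x j ≤ Z i j
  ncard_support_le : {i | x i ≠ 0}.ncard ≤ t

/-- The entries of `Z` in the positions `R` are attained by at most `m` minorants of support `t`.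
Positions are unordered pairs, as the definition is meant for symmetric matrices. -/
def Attainable [MulZeroClass L] [LE L] (t m : ℕ) (Z : Matrix ι ι L) (R : Set (Sym2 ι)) : Prop :=
  ∃ T : List (ι → L), T.length ≤ m ∧ (∀ x ∈ T, IsSparseMinorant t Z x) ∧
    ∀ i j, s(i, j) ∈ R → ∃ x ∈ T, x i * x j = Z i j

namespace Attainable

section Basic

variable [MulZeroClass L] [LE L] {t m m' : ℕ} {Z : Matrix ι ι L} {R R' : Set (Sym2 ι)}

theorem mono (h : Attainable t m Z R) (hm : m ≤ m') (hR : R' ⊆ R) : Attainable t m' Z R' := by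
  obtain ⟨T, hTm, hT, hTR⟩ := h
  exact ⟨T, hTm.trans hm, hT, fun i j hij => hTR i j (hR hij)⟩

theorem empty : Attainable t 0 Z ∅ :=
  ⟨[], le_rfl, by simp, by simp⟩

theorem union (h : Attainable t m Z R) (h' : Attainable t m' Z R') :
    Attainable t (m + m') Z (R ∪ R') := by
  obtain ⟨T, hTm, hT, hTR⟩ := h
  obtain ⟨T', hTm', hT', hTR'⟩ := h'
  refine ⟨T ++ T', by grind, by grind, fun i j hij => ?_⟩
  simp only [List.mem_append, or_and_right, exists_or]
  exact hij.imp (hTR i j) (hTR' i j)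

theorem biUnion {K : Finset κ} {R : κ → Set (Sym2 ι)} (h : ∀ k ∈ K, Attainable t 1 Z (R k)) :
    Attainable t K.card Z (⋃ k ∈ K, R k) := by
  classical
  induction K using Finset.induction_on with
  | empty => simpa using empty
  | insert k K hk ih =>
    rw [Finset.forall_mem_insert] at h
    rw [Finset.card_insert_of_notMem hk, Finset.set_biUnion_insert, add_comm]
    exact h.1.union (ih h.2)

end Basic

theorem hasSparseCPRep [IdemCommSemiring L] {t m : ℕ} {Z : Matrix ι ι L}
    (h : Attainable t m Z Set.univ) : HasSparseCPRep t m Z := by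
  obtain ⟨T, hTm, hT, hTZ⟩ := h
  refine ⟨T.length, hTm, of fun i k => T[k] i, ?_,
    fun k => (hT _ (List.getElem_mem k.2)).ncard_support_le⟩
  ext i j
  simp only [mul_apply, transpose_apply, of_apply]
  refine le_antisymm ?_ (sum_le_of_forall_le fun k _ => (hT _ (List.getElem_mem _)).mul_le i j)
  obtain ⟨x, hx, hxZ⟩ := hTZ i j trivial
  obtain ⟨k, rfl⟩ := List.get_of_mem hx
  rw [← hxZ]
  exact Finset.single_le_sum_of_canonicallyOrdered
    (f := fun k : Fin T.length => T[k] i * T[k] j) (Finset.mem_univ k)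

end Attainable

/-- `Z u v` is the largest off-diagonal entry of `Z` with row and column in `S`. -/
structure IsMaxOffDiag [LE L] (Z : Matrix ι ι L) (S : Finset ι) (u v : ι) : Prop where
  left_mem : u ∈ S
  right_mem : v ∈ S
  ne : u ≠ v
  le : ∀ i ∈ S, ∀ j ∈ S, i ≠ j → Z i j ≤ Z u v

section IsMaxOffDiag

variable {Z : Matrix ι ι L} {S : Finset ι} {u v : ι}

theorem exists_isMaxOffDiag [Preorder L] [@Std.Total L (· ≤ ·)] (Z : Matrix ι ι L)
    (hS : S.Nontrivial) : ∃ u v, IsMaxOffDiag Z S u v := by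
  have hne : S.offDiag.Nonempty := by
    rwa [← Finset.coe_nonempty, Finset.coe_offDiag, Set.offDiag_nonempty]
  obtain ⟨⟨u, v⟩, huv, hmax⟩ := S.offDiag.exists_maximalFor (fun p => Z p.1 p.2) hne
  obtain ⟨hu, hv, huv⟩ := Finset.mem_offDiag.1 huv
  refine ⟨u, v, hu, hv, huv, fun i hi j hj hij => ?_⟩
  rcases total_of (· ≤ ·) (Z i j) (Z u v) with h | h
  · exact h
  · exact hmax (j := (i, j)) (Finset.mem_offDiag.2 ⟨hi, hj, hij⟩) h

variable [LE L]

namespace IsMaxOffDiag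

theorem symm (hZ : Z.IsSymm) (h : IsMaxOffDiag Z S u v) : IsMaxOffDiag Z S v u :=
  ⟨h.right_mem, h.left_mem, h.ne.symm, by simpa only [hZ.apply u v] using h.le⟩

variable [DecidableEq ι]

theorem pair_subset (h : IsMaxOffDiag Z S u v) : {u, v} ⊆ S :=
  Finset.insert_subset h.left_mem (Finset.singleton_subset_iff.2 h.right_mem)

theorem card_sdiff_add_two (h : IsMaxOffDiag Z S u v) : (S \ {u, v}).card + 2 = S.card := by
  rw [← Finset.card_pair h.ne]
  exact Finset.card_sdiff_add_card_eq_card h.pair_subset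

end IsMaxOffDiag

end IsMaxOffDiag

open scoped Classical in
/-- The row of `Z` at the center `c`, cut down to the star with leaves `a` and `b`. The leaves may
coincide, in which case the support has at most two elements. -/
noncomputable def cherry [Zero L] (Z : Matrix ι ι L) (c a b : ι) : ι → L :=
  ({c, a, b} : Set ι).indicator (Z c)

variable [IdemCommSemiring L] {Z : Matrix ι ι L}

theorem isSparseMinorant_cherry (le_one : ∀ x : L, x ≤ 1) (hZ : IsCorrelation Z) {c a b : ι}
    (h : Z c a * Z c b ≤ Z a b) : IsSparseMinorant 3 Z (cherry Z c a b) where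
  mul_le i j := by
    have symm_a : Z a c = Z c a := hZ.symm.apply c a
    have symm_b : Z b c = Z c b := hZ.symm.apply c b
    have h' : Z c b * Z c a ≤ Z b a := by rwa [mul_comm, hZ.symm.apply a b]
    by_cases hi : i ∈ ({c, a, b} : Set ι)
    · by_cases hj : j ∈ ({c, a, b} : Set ι)
      · rw [cherry, Set.indicator_of_mem hi, Set.indicator_of_mem hj]
        rcases hi with rfl | rfl | rfl <;> rcases hj with rfl | rfl | rfl <;>
          simp only [hZ.diag, symm_a, symm_b, one_mul, mul_one, le_one, le_refl, h, h']
      · simp [cherry, hj]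
    · simp [cherry, hi]
  ncard_support_le := by
    classical
    rw [← Function.support, cherry, Set.support_indicator]
    refine (Set.ncard_le_ncard Set.inter_subset_left).trans ?_
    simpa using (Set.ncard_coe_finset {c, a, b}).trans_le Finset.card_le_three

theorem attainable_cherry (le_one : ∀ x : L, x ≤ 1) (hZ : IsCorrelation Z) {c a b : ι}
    (h : Z c a * Z c b ≤ Z a b) : Attainable 3 1 Z {s(c, c), s(c, a), s(c, b)} := by
  have attained : ∀ i ∈ ({c, a, b} : Set ι), cherry Z c a b c * cherry Z c a b i = Z c i :=
    fun i hi => by simp [cherry, hi, hZ.diag]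
  refine ⟨[cherry Z c a b], le_rfl, by simpa using isSparseMinorant_cherry le_one hZ h, ?_⟩
  intro i j hij
  refine ⟨_, List.mem_singleton_self _, ?_⟩
  obtain ⟨rfl, hj⟩ | ⟨rfl, hi⟩ :
      (c = i ∧ j ∈ ({c, a, b} : Set ι)) ∨ (c = j ∧ i ∈ ({c, a, b} : Set ι)) := by
    simp only [Set.mem_insert_iff, Set.mem_singleton_iff, Sym2.eq_iff] at hij ⊢
    grind
  · exact attained j hj
  · rw [mul_comm, attained i hi, hZ.symm.apply]

theorem sq_add_two_div_four (n : ℕ) : (n + 2) ^ 2 / 4 = n ^ 2 / 4 + (n + 1) := by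
  have : (n + 2) ^ 2 = n ^ 2 + 4 * (n + 1) := by ring
  lia

section Peeling

variable [@Std.Total L (· ≤ ·)] {S : Finset ι} {u v : ι} (le_one : ∀ x : L, x ≤ 1)
  (hZ : IsCorrelation Z)
include le_one hZ

section DecidableEq

variable [DecidableEq ι]

theorem IsMaxOffDiag.attainable_rows_and_diag (h : IsMaxOffDiag Z S u v) {w : ι}
    (hw : w ∈ S \ {u, v}) :
    Attainable 3 (S.card - 1) Z
      {p | ∃ x ∈ S, p = s(u, x) ∨ p = s(v, x) ∨ x ≠ w ∧ p = s(x, x)} := by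
  wlog huw : Z u w ≤ Z v w generalizing u v
  · refine (this (h.symm hZ.symm) (by rwa [Finset.pair_comm])
      ((total_of (· ≤ ·) _ _).resolve_left huw)).mono le_rfl ?_
    grind
  have row_u : Attainable 3 1 Z {s(u, u), s(u, v), s(u, w)} :=
    attainable_cherry le_one hZ ((mul_le_of_le_one_left' (le_one _)).trans huw)
  have row_v : Attainable 3 1 Z {s(v, v), s(v, w), s(v, w)} :=
    attainable_cherry le_one hZ ((le_one _).trans_eq (hZ.diag w).symm)
  have other_rows : Attainable 3 ((S \ {u, v}).erase w).card Z
      (⋃ k ∈ (S \ {u, v}).erase w, {s(k, k), s(k, u), s(k, v)}) := by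
    refine .biUnion fun k hk => attainable_cherry le_one hZ ?_
    have hku : Z k u ≤ Z u v := h.le k (by grind) u h.left_mem (by grind)
    exact (mul_le_of_le_one_right' (le_one _)).trans hku
  refine ((row_u.union row_v).union other_rows).mono ?_ ?_
  · have := h.card_sdiff_add_two
    have := Finset.card_erase_add_one hw
    lia
  · rintro _ ⟨x, hx, hp⟩
    simp only [Set.mem_union, Set.mem_iUnion, Set.mem_insert_iff, Set.mem_singleton_iff,
      Finset.mem_erase, Finset.mem_sdiff, exists_prop]
    by_cases hxuvw : x = u ∨ x = v ∨ x = w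
    · left
      grind
    · right
      exact ⟨x, by grind⟩

theorem IsMaxOffDiag.attainable_of_sdiff (h : IsMaxOffDiag Z S u v) {w k : ι} {m : ℕ}
    (hw : w ∈ S \ {u, v}) (hm : Attainable 3 m Z ((S \ {u, v}).sym2 \ {s(k, k)})) :
    Attainable 3 (m + (S.card - 1)) Z (S.sym2 \ ({s(k, k)} ∩ {s(w, w)})) := by
  refine (hm.union (h.attainable_rows_and_diag le_one hZ hw)).mono le_rfl ?_
  refine Sym2.ind fun i j => ?_
  rintro ⟨hij, hkw⟩
  obtain ⟨hi, hj⟩ := Finset.mk_mem_sym2_iff.1 hij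
  by_cases hiuv : i ∈ ({u, v} : Finset ι)
  · obtain rfl | rfl : i = u ∨ i = v := by simpa using hiuv
    · exact .inr ⟨j, hj, .inl rfl⟩
    · exact .inr ⟨j, hj, .inr (.inl rfl)⟩
  by_cases hjuv : j ∈ ({u, v} : Finset ι)
  · obtain rfl | rfl : j = u ∨ j = v := by simpa using hjuv
    · exact .inr ⟨i, hi, .inl Sym2.eq_swap⟩
    · exact .inr ⟨i, hi, .inr (.inl Sym2.eq_swap)⟩
  by_cases hk : s(i, j) = s(k, k)
  · have i_ne_w : i ≠ w := by
      rintro rfl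
      simp_all
    obtain ⟨rfl, rfl⟩ : i = k ∧ j = k := by simpa using hk
    exact .inr ⟨_, hi, .inr (.inr ⟨i_ne_w, rfl⟩)⟩
  · exact .inl ⟨Finset.mk_mem_sym2_iff.2 (by grind), hk⟩

end DecidableEq

theorem exists_attainable_sdiff_diag (hS : S.Nonempty) :
    ∃ k ∈ S, Attainable 3 (S.card ^ 2 / 4) Z (S.sym2 \ {s(k, k)}) := by
  classical
  induction S using Finset.strongInduction with
  | H S ih =>
  obtain ⟨a, rfl⟩ | hS := hS.exists_eq_singleton_or_nontrivial
  · exact ⟨a, by simp, Attainable.empty.mono (by simp) (by simp [Sym2.diag])⟩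
  obtain ⟨u, v, huv⟩ := exists_isMaxOffDiag Z hS
  have card_S := huv.card_sdiff_add_two
  rcases (S \ {u, v}).eq_empty_or_nonempty with hR | hR
  · refine ⟨v, huv.right_mem, (attainable_cherry le_one hZ (c := u) (a := v) (b := v)
      ((le_one _).trans_eq (hZ.diag v).symm)).mono (by simp [← card_S, hR]) ?_⟩
    rw [Finset.sdiff_eq_empty_iff_subset] at hR
    rintro ⟨i, j⟩ ⟨hS, hij⟩
    have := Finset.mk_mem_sym2_iff.1 hS
    grind
  · have R_ssubset : S \ {u, v} ⊂ S :=
      Finset.sdiff_ssubset huv.pair_subset (Finset.insert_nonempty _ _)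
    obtain ⟨k, hk, hrec⟩ := ih _ R_ssubset hR
    refine ⟨k, Finset.sdiff_subset hk, (huv.attainable_of_sdiff le_one hZ hk hrec).mono ?_ ?_⟩
    · rw [← card_S, sq_add_two_div_four]
      lia
    · rw [Set.inter_self]

theorem attainable_sym2 (hS : 4 ≤ S.card) : Attainable 3 (S.card ^ 2 / 4) Z S.sym2 := by
  classical
  have S_nontrivial : S.Nontrivial := Finset.one_lt_card_iff_nontrivial.1 (by lia)
  obtain ⟨u, v, huv⟩ := exists_isMaxOffDiag Z S_nontrivial
  have card_S := huv.card_sdiff_add_two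
  have R_nontrivial : (S \ {u, v}).Nontrivial := Finset.one_lt_card_iff_nontrivial.1 (by lia)
  obtain ⟨k, -, hrec⟩ := exists_attainable_sdiff_diag le_one hZ R_nontrivial.nonempty
  obtain ⟨w, hw, hwk⟩ := R_nontrivial.exists_ne k
  refine (huv.attainable_of_sdiff le_one hZ hw hrec).mono ?_ ?_
  · rw [← card_S, sq_add_two_div_four]
    lia
  · simp [hwk.symm]

end Peeling

end InclineCP

open InclineCP in
theorem stmt_11_general {ι κ L : Type*} [Fintype ι] [Fintype κ] [IdemCommSemiring L]
    [@Std.Total L (· ≤ ·)] (le_one : ∀ x : L, x ≤ 1) (dvd_of_le : ∀ x y : L, x ≤ y → y ∣ x)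
    (hι : 4 ≤ Fintype.card ι) (B : Matrix ι κ L) :
    HasSparseCPRep 3 (Fintype.card ι ^ 2 / 4) (B * Bᵀ) := by
  classical
  obtain ⟨d, Z, hZ, hBZ⟩ := exists_isCorrelation_mul_transpose_eq dvd_of_le B
  have hattain : Attainable 3 (Fintype.card ι ^ 2 / 4) Z Set.univ := by
    simpa using attainable_sym2 le_one hZ (S := Finset.univ) hι
  rw [hBZ]
  exact hattain.hasSparseCPRep.diagonal_mul_mul_diagonal d

/-- Over a totally ordered normal incline, every n×n completely
positive matrix with n ≥ 4 has a ⌊n²/4⌋-term support-3 rank-1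
CP-representation: `A = B * Bᵀ` with at most ⌊n²/4⌋ columns, each column of `B`
having at most 3 nonzero entries. -/
theorem stmt_11 {L : Type*} [CommSemiring L]
    (hidem : ∀ a : L, a + a = a)
    (habs : ∀ a b : L, a + a * b = a)
    (hLI : ∀ x y : L, x + y = y → ∃ z : L, x = y * z)
    (hsq : ∀ x : L, ∃! c : L, c * c = x)
    (hAG : ∀ x y : L, x * y + (x * x + y * y) = x * x + y * y)
    (htot : ∀ x y : L, x + y = y ∨ y + x = x)
    (n : ℕ) (hn : 4 ≤ n) (A : Matrix (Fin n) (Fin n) L)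
    (hcp : ∃ m : ℕ, ∃ B : Matrix (Fin n) (Fin m) L, A = B * Bᵀ) :
    ∃ k : ℕ, k ≤ n ^ 2 / 4 ∧
      ∃ B : Matrix (Fin n) (Fin k) L, A = B * Bᵀ ∧
        ∀ j : Fin k, {i : Fin n | B i j ≠ 0}.ncard ≤ 3 := by
  let _ : IdemCommSemiring L := { ‹CommSemiring L›, IdemSemiring.ofSemiring hidem with }
  have : @Std.Total L (· ≤ ·) := ⟨htot⟩
  have le_one (x : L) : x ≤ 1 := add_eq_left_iff_le.1 (by simpa using habs 1 x)
  obtain ⟨m, B, rfl⟩ := hcp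
  have hB := stmt_11_general le_one hLI (by rwa [Fintype.card_fin]) B
  rwa [Fintype.card_fin] at hB
end

section
/- Let L be a normal incline, let n ≥ 3, and let A be an n×n completely positive matrix over L such that every left almost principal 2×2 submatrix of A has its positive determinant greater than or equal to its negative determinant, i.e., for all indices i, j, k with i < k, j < k and i ≠ j one has A i k * A k j ≤ A i j * A k k. Then A is UL-completely positive: there exists an n×n upper triangular matrix U over L (U i j = 0 whenever i > j) with A = U * Uᵀ. -/
open Matrix

/-!
Write `A = B * Bᵀ` and let `r i` be the sum of the `i`-th row of `B`. The LI-property makes squaring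
additive, so `A i i = r i * r i`, while `A i j ≤ r i * r j` is clear. Hence, for each `k`, there is
a column `v` with `A i k = v i * r k`, and the condition on the minors reads
`(r k * r k) * (v i * v j) ≤ (r k * r k) * A i j`. One factor `r k` cancels because squaring is
injective. The other one cannot be cancelled outright, but it can after multiplying `v` by some `g`
with `r k * g = r k`. Then `v i * v j ≤ A i j`, and these columns, cut off below the diagonal, form
`U`: the entry `A i j` with `i ≤ j` is attained at the `j`-th term of `∑ k, U i k * U j k`.
-/

section IdemSemiring

variable {L : Type*} [IdemSemiring L] {ι κ : Type*}

lemma sum_le_of_forall_le {S : Finset κ} {f : κ → L} {c : L} (h : ∀ l ∈ S, f l ≤ c) :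
    ∑ l ∈ S, f l ≤ c :=
  Finset.sum_induction f (· ≤ c) (fun _ _ => add_le) zero_le h

lemma mul_transpose_apply_le_sum_mul_sum [Fintype κ] (B : Matrix ι κ L) (i j : ι) :
    (B * Bᵀ) i j ≤ (∑ l, B i l) * ∑ l, B j l := by
  refine sum_le_of_forall_le fun l _ => mul_le_mul' ?_ ?_ <;>
    exact Finset.single_le_sum_of_canonicallyOrdered (Finset.mem_univ l)

end IdemSemiring

/-- A commutative incline with identities. Absorption `a + a * b = a` is encoded as `1` being the
greatest element. -/
class CommIncline (L : Type*) extends IdemCommSemiring L where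
  le_one (a : L) : a ≤ 1

namespace CommIncline

variable {L : Type*} [CommIncline L]

lemma mul_le_left (a b : L) : a * b ≤ a :=
  mul_le_of_le_one_right' (le_one b)

lemma mul_le_right (a b : L) : a * b ≤ b :=
  mul_le_of_le_one_left' (le_one a)

lemma add_pow_three_le (z w : L) : (z + w) ^ 3 ≤ z * z + w * w :=
  calc (z + w) ^ 3 = z * z * (z + 3 * w) + w * w * (w + 3 * z) := by ring
    _ ≤ z * z + w * w := add_le_add (mul_le_left _ _) (mul_le_left _ _)

end CommIncline

/-- A commutative incline with the LI-property: divisibility is the reverse of the incline order. -/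
class DivisibleIncline (L : Type*) extends CommIncline L where
  dvd_of_le {x y : L} : x ≤ y → y ∣ x

namespace DivisibleIncline

open CommIncline

/-- The divisible incline given by the equational axioms; idempotence of the addition is the case
`b = 1` of absorption. -/
abbrev ofCommSemiring {L : Type*} [CommSemiring L] (absorb : ∀ a b : L, a + a * b = a)
    (exists_eq_mul : ∀ x y : L, x + y = y → ∃ z : L, x = y * z) : DivisibleIncline L where
  __ := IdemSemiring.ofSemiring fun a : L => by simpa using absorb a 1
  mul_comm := mul_comm
  le_one a := show a + 1 = 1 by simpa [add_comm] using absorb 1 a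
  dvd_of_le {x y} := exists_eq_mul x y

variable {L : Type*} [DivisibleIncline L]

lemma add_mul_self (x y : L) : (x + y) * (x + y) = x * x + y * y := by
  obtain ⟨z, hz⟩ := dvd_of_le (le_self_add : x ≤ x + y)
  obtain ⟨w, hw⟩ := dvd_of_le (le_add_self : y ≤ x + y)
  set s := x + y
  have hszw : s = s * (z + w) := by rw [mul_add, ← hz, ← hw]
  have hs_le : s ≤ s * (z * z + w * w) :=
    calc s = s * (z + w) * (z + w) * (z + w) := by rw [← hszw, ← hszw, ← hszw]
      _ = s * (z + w) ^ 3 := by ring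
      _ ≤ s * (z * z + w * w) := by grw [add_pow_three_le]
  apply le_antisymm
  · calc s * s ≤ s * (s * (z * z + w * w)) := by gcongr
      _ = s * z * (s * z) + s * w * (s * w) := by ring
      _ = x * x + y * y := by rw [← hz, ← hw]
  · exact add_le (mul_le_mul' le_self_add le_self_add) (mul_le_mul' le_add_self le_add_self)

lemma sum_mul_sum_self {κ : Type*} (S : Finset κ) (f : κ → L) :
    (∑ l ∈ S, f l) * ∑ l ∈ S, f l = ∑ l ∈ S, f l * f l := by
  classical
  induction S using Finset.induction_on with
  | empty => simp
  | insert l S hl ih => rw [Finset.sum_insert hl, Finset.sum_insert hl, add_mul_self, ih]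

lemma mul_transpose_apply_self {ι κ : Type*} [Fintype κ] (B : Matrix ι κ L) (i : ι) :
    (B * Bᵀ) i i = (∑ l, B i l) * ∑ l, B i l :=
  (sum_mul_sum_self Finset.univ (B i)).symm

lemma mul_transpose_apply_mul_self_le {ι κ : Type*} [Fintype κ] (B : Matrix ι κ L) (i j : ι) :
    (B * Bᵀ) i j * (B * Bᵀ) i j ≤ (B * Bᵀ) i i * (B * Bᵀ) j j := by
  rw [mul_transpose_apply_self, mul_transpose_apply_self, mul_mul_mul_comm]
  exact mul_le_mul' (mul_transpose_apply_le_sum_mul_sum B i j)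
    (mul_transpose_apply_le_sum_mul_sum B i j)

lemma le_of_mul_self_le_mul (hinj : Function.Injective fun x : L => x * x) {x t : L}
    (h : x * x ≤ x * t) : x ≤ t := by
  obtain ⟨z, hz⟩ := dvd_of_le (le_add_self : t ≤ x + t)
  have hsq : (x + t) * (x + t) = (x + t) * t :=
    le_antisymm (by grw [add_mul_self, h, add_mul]) (mul_le_mul_right le_add_self _)
  have ht : t * t = (x + t) * (x + t) :=
    calc t * t = (x + t) * t * z := by nth_rw 1 [hz]; ring
      _ = (x + t) * ((x + t) * z) := by rw [← hsq, mul_assoc]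
      _ = (x + t) * (x + t) := by rw [← hz, hsq]
  exact add_eq_right_iff_le.1 (hinj ht).symm

lemma mul_le_of_mul_mul_le_mul (hinj : Function.Injective fun x : L => x * x) {s x t : L}
    (h : s * (s * x) ≤ s * t) : s * x ≤ t :=
  le_of_mul_self_le_mul hinj <|
    calc s * x * (s * x) = x * (s * (s * x)) := by ring
      _ ≤ x * (s * t) := by gcongr
      _ = s * x * t := by ring

lemma exists_mul_eq_self_mul_le (hinj : Function.Injective fun x : L => x * x) {s c t : L}
    (h : s * c ≤ s * t) : ∃ z, s * z = s ∧ c * z ≤ t := by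
  set u := s + t + c with hu
  have hsu : s ≤ u := le_self_add.trans le_self_add
  obtain ⟨z, hz⟩ := dvd_of_le (le_self_add : s + t ≤ u)
  obtain ⟨p, hp⟩ := dvd_of_le hsu
  have hsuz : s * u = s * (u * z) := by
    rw [← hz, hu, mul_add s (s + t)]
    exact (h.trans (by grw [← le_add_self])).add_eq_left
  have hsz : s * z = s := by
    refine (mul_le_left s z).antisymm (le_of_mul_self_le_mul hinj (le_of_eq ?_))
    calc s * s = s * u * p := by nth_rw 2 [hp]; ring
      _ = s * ((u * p) * z) := by rw [hsuz]; ring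
      _ = s * (s * z) := by rw [← hp]
  have hcz : c * z ≤ s + t := by rw [hz]; grw [← (le_add_self : c ≤ u)]
  obtain ⟨y, hy⟩ := dvd_of_le hcz
  have hsy : s * y ≤ t := mul_le_of_mul_mul_le_mul hinj <|
    calc s * (s * y) ≤ s * (c * z) := by rw [hy]; grw [← (le_self_add : s ≤ s + t)]
      _ ≤ s * c := by grw [mul_le_left c z]
      _ ≤ s * t := h
  refine ⟨z, hsz, ?_⟩
  rw [hy, add_mul]
  exact add_le hsy (mul_le_left t y)

lemma exists_mul_eq_self_forall_mul_le (hinj : Function.Injective fun x : L => x * x)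
    {κ : Type*} [Finite κ] {s : L} {c t : κ → L} (h : ∀ i, s * c i ≤ s * t i) :
    ∃ z, s * z = s ∧ ∀ i, c i * z ≤ t i := by
  cases nonempty_fintype κ
  choose z hsz hcz using fun i => exists_mul_eq_self_mul_le hinj (h i)
  refine ⟨∏ i, z i, ?_, fun i => ?_⟩
  · refine Finset.prod_induction z (fun p => s * p = s) (fun p q hp hq => ?_) (mul_one s)
      fun i _ => hsz i
    rw [← mul_assoc, hp, hq]
  · obtain ⟨p, hp⟩ := Finset.dvd_prod_of_mem z (Finset.mem_univ i)
    calc c i * ∏ i, z i = c i * z i * p := by rw [hp, mul_assoc]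
      _ ≤ c i * z i := mul_le_left _ _
      _ ≤ t i := hcz i

lemma exists_mul_eq_forall_mul_le (hinj : Function.Injective fun x : L => x * x)
    {ι : Type*} [Finite ι] {s : L} {a : ι → L} (T : ι → ι → L) (ha : ∀ i, a i ≤ s) :
    ∃ v : ι → L, (∀ i, v i * s = a i) ∧
      ∀ i j, a i * a j ≤ T i j * (s * s) → v i * v j ≤ T i j := by
  choose x hx using fun i => dvd_of_le (ha i)
  obtain ⟨z, hsz, hz⟩ := exists_mul_eq_self_forall_mul_le hinj (s := s)
    (κ := {p : ι × ι // a p.1 * a p.2 ≤ T p.1 p.2 * (s * s)})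
    (c := fun p => x p.1.1 * x p.1.2) (t := fun p => T p.1.1 p.1.2) fun ⟨(i, j), hij⟩ =>
      mul_le_of_mul_mul_le_mul hinj <|
        calc s * (s * (x i * x j)) = a i * a j := by rw [hx i, hx j]; ring
          _ ≤ T i j * (s * s) := hij
          _ = s * (s * T i j) := by ring
  refine ⟨fun i => x i * z, fun i => ?_, fun i j hij => ?_⟩
  · calc x i * z * s = s * z * x i := by ring
      _ = a i := by rw [hsz, ← hx]
  · calc x i * z * (x j * z) = x i * x j * z * z := by ring
      _ ≤ x i * x j * z := mul_le_left _ _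
      _ ≤ T i j := hz ⟨(i, j), hij⟩

end DivisibleIncline

lemma exists_isUpperTriangular_eq_mul_transpose {L ι : Type*} [IdemCommSemiring L]
    [Fintype ι] [LinearOrder ι] {A : Matrix ι ι L} (hA : A.IsSymm) (V : Matrix ι ι L)
    (hVA : ∀ i j k, i ≤ k → j ≤ k → V i k * V j k ≤ A i j)
    (hAV : ∀ i k, i ≤ k → A i k ≤ V i k * V k k) :
    ∃ U : Matrix ι ι L, U.IsUpperTriangular ∧ A = U * Uᵀ := by
  let U : Matrix ι ι L := of fun i k => if i ≤ k then V i k else 0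
  have hU {i k} (hik : i ≤ k) : U i k = V i k := if_pos hik
  have hU₀ : U.IsUpperTriangular := fun i k hki => if_neg (not_le.2 hki)
  have term_le_sum (i j k) : U i k * U j k ≤ (U * Uᵀ) i j :=
    Finset.single_le_sum_of_canonicallyOrdered (f := fun k => U i k * U j k) (Finset.mem_univ k)
  refine ⟨U, hU₀, ext fun i j => le_antisymm ?_ (sum_le_of_forall_le fun k _ => ?_)⟩
  · rcases le_total i j with hij | hji
    · calc A i j ≤ U i j * U j j := by rw [hU hij, hU le_rfl]; exact hAV i j hij
        _ ≤ (U * Uᵀ) i j := term_le_sum i j j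
    · calc A i j = A j i := hA.apply j i
        _ ≤ U i i * U j i := by rw [hU hji, hU le_rfl, mul_comm]; exact hAV j i hji
        _ ≤ (U * Uᵀ) i j := term_le_sum i j i
  · change U i k * U j k ≤ A i j
    by_cases hk : i ≤ k ∧ j ≤ k
    · rw [hU hk.1, hU hk.2]; exact hVA i j k hk.1 hk.2
    · rcases not_and_or.1 hk with h | h <;> simp [hU₀ (not_le.1 h)]

open CommIncline DivisibleIncline in
theorem stmt_12_general {L : Type*} [DivisibleIncline L]
    (hinj : Function.Injective fun x : L => x * x) {ι κ : Type*} [Fintype ι] [LinearOrder ι]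
    [Fintype κ] {A : Matrix ι ι L} {B : Matrix ι κ L} (hAB : A = B * Bᵀ)
    (hleft : ∀ i j k, i < k → j < k → i ≠ j → A i k * A k j ≤ A i j * A k k) :
    ∃ U : Matrix ι ι L, U.IsUpperTriangular ∧ A = U * Uᵀ := by
  let r i := ∑ l, B i l
  have hA : A.IsSymm := by simp [hAB, IsSymm, transpose_mul]
  have hdiag i : A i i = r i * r i := hAB ▸ mul_transpose_apply_self B i
  have hle i j : A i j ≤ r i * r j := hAB ▸ mul_transpose_apply_le_sum_mul_sum B i j
  have hminor i j k (hik : i ≤ k) (hjk : j ≤ k) : A i k * A j k ≤ A i j * (r k * r k) := by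
    rw [← hdiag]
    rcases hik.eq_or_lt with rfl | hik
    · rw [mul_comm, hA.apply]
    rcases hjk.eq_or_lt with rfl | hjk
    · rfl
    rcases eq_or_ne i j with rfl | hij
    · exact hAB ▸ mul_transpose_apply_mul_self_le B i k
    · rw [← hA.apply j k]
      exact hleft i j k hik hjk hij
  choose v hv hvv using fun k => exists_mul_eq_forall_mul_le hinj A (s := r k)
    (a := fun i => A i k) fun i => (hle i k).trans (mul_le_right _ _)
  have hr k : r k ≤ v k k := le_of_mul_self_le_mul hinj (by rw [← hdiag, ← hv, mul_comm])
  refine exists_isUpperTriangular_eq_mul_transpose hA (of fun i k => v k i)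
    (fun i j k hik hjk => hvv k i j (hminor i j k hik hjk)) fun i k _ => ?_
  calc A i k = v k i * r k := (hv k i).symm
    _ ≤ v k i * v k k := by grw [hr k]

/-- (Incline Markham theorem, UL version) If `A` is an n×n
completely positive matrix (n ≥ 3) over a normal incline all of whose left
almost principal 2×2 submatrices have `det⁺ ≥ det⁻`, then `A` is
UL-completely positive. -/
theorem stmt_12 {L : Type*} [CommSemiring L]
    (hidem : ∀ a : L, a + a = a)
    (habs : ∀ a b : L, a + a * b = a)
    (hLI : ∀ x y : L, x + y = y → ∃ z : L, x = y * z)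
    (hsq : ∀ x : L, ∃! c : L, c * c = x)
    (hAG : ∀ x y : L, x * y + (x * x + y * y) = x * x + y * y)
    (n : ℕ) (hn : 3 ≤ n) (A : Matrix (Fin n) (Fin n) L)
    (hcp : ∃ m : ℕ, ∃ B : Matrix (Fin n) (Fin m) L, A = B * Bᵀ)
    (hleft : ∀ i j k : Fin n, i < k → j < k → i ≠ j →
      A i k * A k j + A i j * A k k = A i j * A k k) :
    ∃ U : Matrix (Fin n) (Fin n) L, (∀ i j : Fin n, j < i → U i j = 0) ∧
      A = U * Uᵀ := by
  obtain ⟨m, B, hAB⟩ := hcp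
  let := DivisibleIncline.ofCommSemiring habs hLI
  have hinj : Function.Injective fun x : L => x * x := fun x y hxy => (hsq (y * y)).unique hxy rfl
  obtain ⟨U, hU, hAU⟩ := stmt_12_general hinj hAB hleft
  exact ⟨U, fun i j hji => hU hji, hAU⟩
end

section
/- Let L be a normal incline and let A be an n×n completely positive matrix over L such that every right almost principal 2×2 submatrix of A has its positive determinant greater than or equal to its negative determinant, i.e., for all indices i, k, l with i < k, i < l and k ≠ l one has A i l * A k i ≤ A i i * A k l. Then A is LU-completely positive: there exists an n×n lower triangular matrix C over L (C i j = 0 whenever i < j) with A = C * Cᵀ. -/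
open Matrix

/-!
In an incline with the LI-property, `a ≤ b` means `b ∣ a`. When moreover squaring is injective,
a factor `s` can be cancelled from `s * x ≤ s * y` as soon as `x ≤ s`; the AG-property, and with it
`(∑ j, b j) ^ 2 = ∑ j, b j ^ 2`, follows. Hence the row sums `s i` of `B` are square roots of the
diagonal of `A = B * Bᵀ`, and `A i k ≤ s i * s k`, so that `A i k = s i * x k` for some `x`.

The `i`-th column of `C` should be `A i k / s i`, but the solution `x k` of `s i * x k = A i k` is
not unique. The determinant condition reads `s i * (x k * x l) ≤ s i * A k l` after one
cancellation, and `x k` can then be replaced by a smaller solution `w k` such that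
`w k * w l ≤ A k l`. With these columns `C * Cᵀ ≤ A`, while `A k l ≤ (C * Cᵀ) k l` is already
witnessed by the summand of index `min k l`.
-/

/-- Commutative inclines with the LI-property: the implication `b ∣ a → a ≤ b` is the
absorption law and the converse is the LI-property. -/
class IsLIIncline (L : Type*) [IdemCommSemiring L] : Prop where
  le_iff_dvd {a b : L} : a ≤ b ↔ b ∣ a

/-- LI-inclines in which an element has at most one square root; unlike in a normal incline, the
square root need not exist. -/
class IsSqrtUniqueIncline (L : Type*) [IdemCommSemiring L] : Prop extends IsLIIncline L where
  eq_of_mul_self_eq_mul_self {a b : L} : a * a = b * b → a = b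

section IdemCommSemiring

variable {L ι : Type*} [IdemCommSemiring L]

theorem finset_sum_le_of_forall_le {t : Finset ι} {f : ι → L} {b : L} (h : ∀ i ∈ t, f i ≤ b) :
    ∑ i ∈ t, f i ≤ b :=
  Finset.sum_induction f (· ≤ b) (fun _ _ ↦ add_le) zero_le h

theorem finset_sum_mul_le_sum_mul_sum (t : Finset ι) (f g : ι → L) :
    ∑ i ∈ t, f i * g i ≤ (∑ i ∈ t, f i) * ∑ i ∈ t, g i :=
  finset_sum_le_of_forall_le fun _ hi ↦ mul_le_mul'
    (Finset.single_le_sum_of_canonicallyOrdered hi) (Finset.single_le_sum_of_canonicallyOrdered hi)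

end IdemCommSemiring

namespace IsLIIncline

variable {L : Type*} [IdemCommSemiring L] [IsLIIncline L]

theorem mul_le_left (a b : L) : a * b ≤ a :=
  le_iff_dvd.2 (dvd_mul_right a b)

theorem mul_le_right (a b : L) : a * b ≤ b :=
  le_iff_dvd.2 (dvd_mul_left b a)

theorem exists_le_le_mul_eq_of_mul_le_mul {a x y : L} (h : a * x ≤ a * y) :
    ∃ w ≤ x, w ≤ y ∧ a * w = a * x := by
  obtain ⟨p, hp⟩ : x + y ∣ x := le_iff_dvd.1 le_self_add
  obtain ⟨q, hq⟩ : x + y ∣ y := le_iff_dvd.1 le_add_self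
  have hxq : x * q = y * p := by
    calc x * q = (x + y) * p * q := by rw [← hp]
      _ = (x + y) * q * p := mul_right_comm _ _ _
      _ = y * p := by rw [← hq]
  refine ⟨x * q, mul_le_left x q, hxq ▸ mul_le_left y p, ?_⟩
  calc a * (x * q) = a * y * p := by rw [hxq, mul_assoc]
    _ = a * (x + y) * p := by rw [mul_add, h.add_eq_right]
    _ = a * x := by rw [mul_assoc, ← hp]

-- `α` and `β` are the quotients `s / (s + z)` and `z / (s + z)`.
theorem exists_mul_eq_mul_and_mul_add_eq (s z : L) :
    ∃ α β, z * α = s * β ∧ s * (α + β) = s := by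
  obtain ⟨α, hα⟩ : s + z ∣ s := le_iff_dvd.1 le_self_add
  obtain ⟨β, hβ⟩ : s + z ∣ z := le_iff_dvd.1 le_add_self
  refine ⟨α, β, ?_, ?_⟩
  · calc z * α = (s + z) * β * α := by rw [← hβ]
      _ = (s + z) * α * β := mul_right_comm _ _ _
      _ = s * β := by rw [← hα]
  · calc s * (α + β) = (s + z) * α * (α + β) := by rw [← hα]
      _ = ((s + z) * α + (s + z) * β) * α := by ring
      _ = s := by rw [← hα, ← hβ, ← hα]

end IsLIIncline

namespace IsSqrtUniqueIncline

open IsLIIncline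

variable {L : Type*} [IdemCommSemiring L] [IsSqrtUniqueIncline L]

theorem le_of_mul_le_mul_left_of_le {s x y : L} (hx : x ≤ s) (h : s * x ≤ s * y) : x ≤ y := by
  obtain ⟨w, hwx, hwy, hw⟩ := exists_le_le_mul_eq_of_mul_le_mul h
  have mul_eq_of_le {u : L} (hu : u ≤ s) : u * w = u * x := by
    obtain ⟨v, rfl⟩ := le_iff_dvd.1 hu
    rw [mul_right_comm, hw, mul_right_comm]
  have hsq : w * w = x * x := by
    rw [mul_eq_of_le (hwx.trans hx), mul_comm, mul_eq_of_le hx]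
  exact eq_of_mul_self_eq_mul_self hsq ▸ hwy

theorem mul_le_mul_self_add_mul_self (x y : L) : x * y ≤ x * x + y * y := by
  apply le_of_mul_le_mul_left_of_le (s := x + y) ((mul_le_left x y).trans le_self_add)
  calc (x + y) * (x * y) = x * y * y + x * x * y := by ring
    _ ≤ x * y * y + x * x * y + (x * x * x + y * y * y) := le_self_add
    _ = (x + y) * (x * x + y * y) := by ring

theorem finset_sum_mul_self {ι : Type*} (t : Finset ι) (f : ι → L) :
    (∑ i ∈ t, f i) * ∑ i ∈ t, f i = ∑ i ∈ t, f i * f i := by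
  refine le_antisymm ?_ (finset_sum_mul_le_sum_mul_sum t f f)
  rw [Finset.sum_mul_sum]
  refine finset_sum_le_of_forall_le fun i hi ↦ finset_sum_le_of_forall_le fun j hj ↦ ?_
  have mul_self_le {k : ι} (hk : k ∈ t) : f k * f k ≤ ∑ i ∈ t, f i * f i :=
    Finset.single_le_sum_of_canonicallyOrdered (f := fun k ↦ f k * f k) hk
  exact (mul_le_mul_self_add_mul_self _ _).trans (add_le (mul_self_le hi) (mul_self_le hj))

theorem exists_le_mul_eq_and_mul_le {s x y z : L} (h : s * (x * z) ≤ s * y) :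
    ∃ w ≤ x, s * w = s * x ∧ w * z ≤ y := by
  obtain ⟨v, hvxz, hvy, hv⟩ := exists_le_le_mul_eq_of_mul_le_mul h
  obtain ⟨q, rfl⟩ := le_iff_dvd.1 hvxz
  -- `α` is neutral where `s` dominates `z`, and `q` is neutral where `z` dominates `s`, so that
  -- `w = x * (α + q)` satisfies `s * w = s * x`.
  obtain ⟨α, β, hzα, hsαβ⟩ := exists_mul_eq_mul_and_mul_add_eq s z
  have hαy : x * z * α ≤ y := by
    have hle : x * z * α ≤ s := by
      rw [mul_assoc, hzα]
      exact (mul_le_right _ _).trans (mul_le_left _ _)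
    exact le_of_mul_le_mul_left_of_le hle ((mul_le_mul_right (mul_le_left _ _) s).trans h)
  have hβq : s * (x * β) ≤ s * (x * q) := by
    apply le_of_mul_le_mul_left_of_le (mul_le_left _ _)
    calc s * (s * (x * β)) = s * (x * (s * β)) := by ring
      _ = s * (x * z) * α := by rw [← hzα]; ring
      _ = s * (x * z * q) * α := by rw [hv]
      _ = s * (x * q) * (z * α) := by ring
      _ = s * (s * (x * q)) * β := by rw [hzα]; ring
      _ ≤ s * (s * (x * q)) := mul_le_left _ _
  refine ⟨x * (α + q), mul_le_left _ _, le_antisymm ?_ ?_, ?_⟩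
  · exact mul_le_mul_right (mul_le_left _ _) s
  · calc s * x = s * (α + β) * x := by rw [hsαβ]
      _ = s * (x * α) + s * (x * β) := by ring
      _ ≤ s * (x * α) + s * (x * q) := by gcongr
      _ = s * (x * (α + q)) := by ring
  · calc x * (α + q) * z = x * z * α + x * z * q := by ring
      _ ≤ y := add_le hαy hvy

theorem exists_le_mul_eq_and_forall_mul_le {ι : Type*} {s x : L} (t : Finset ι) {y z : ι → L}
    (h : ∀ l ∈ t, s * (x * z l) ≤ s * y l) :
    ∃ w ≤ x, s * w = s * x ∧ ∀ l ∈ t, w * z l ≤ y l := by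
  classical
  induction t using Finset.induction_on with
  | empty => exact ⟨x, le_rfl, rfl, by simp⟩
  | insert l t _ ih =>
    rw [Finset.forall_mem_insert] at h
    obtain ⟨w, hwx, hsw, hwt⟩ := ih h.2
    have hwl : s * (w * z l) ≤ s * y l := by rw [← mul_assoc, hsw, mul_assoc]; exact h.1
    obtain ⟨w', hww', hsw', hwl'⟩ := exists_le_mul_eq_and_mul_le hwl
    refine ⟨w', hww'.trans hwx, hsw'.trans hsw, (Finset.forall_mem_insert _ _ _).2 ⟨hwl', ?_⟩⟩
    exact fun k hk ↦ (mul_le_mul_left hww' _).trans (hwt k hk)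

theorem exists_mul_eq_and_mul_mul_le {ι : Type*} {s : L} (t : Finset ι) {x : ι → L}
    {A : Matrix ι ι L} (h : ∀ k ∈ t, ∀ l ∈ t, s * (x k * x l) ≤ s * A k l) :
    ∃ w : ι → L, (∀ k ∈ t, s * w k = s * x k) ∧ ∀ k ∈ t, ∀ l ∈ t, w k * w l ≤ A k l := by
  choose! w hwx hsw hw using fun k hk ↦ exists_le_mul_eq_and_forall_mul_le t (h k hk)
  exact ⟨w, hsw, fun k hk l hl ↦ (mul_le_mul_right (hwx l hl) _).trans (hw k hk l hl)⟩

end IsSqrtUniqueIncline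

section Matrix

open IsLIIncline IsSqrtUniqueIncline

variable {L ι κ : Type*} [IdemCommSemiring L]

theorem eq_mul_transpose_of_le_diag_mul [Fintype ι] [LinearOrder ι] {A C : Matrix ι ι L}
    (hA : A.IsSymm) (hC : ∀ k l i, C k i * C l i ≤ A k l)
    (hdiag : ∀ i k, i ≤ k → A i k ≤ C i i * C k i) : A = C * Cᵀ := by
  have le_mul_apply (k l i : ι) : C k i * C l i ≤ (C * Cᵀ) k l :=
    Finset.single_le_sum_of_canonicallyOrdered (f := fun i ↦ C k i * C l i) (Finset.mem_univ i)
  ext k l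
  refine le_antisymm ?_ (finset_sum_le_of_forall_le fun i _ ↦ hC k l i)
  rcases le_total k l with hkl | hlk
  · exact (hdiag k l hkl).trans (le_mul_apply k l k)
  · calc A k l = A l k := hA.apply l k
      _ ≤ C k l * C l l := (hdiag l k hlk).trans_eq (mul_comm _ _)
      _ ≤ (C * Cᵀ) k l := le_mul_apply k l l

variable [IsSqrtUniqueIncline L]

theorem exists_mul_self_eq_diag_and_le_mul [Fintype κ] (B : Matrix ι κ L) :
    ∃ s : ι → L, (∀ i, s i * s i = (B * Bᵀ) i i) ∧ ∀ i k, (B * Bᵀ) i k ≤ s i * s k :=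
  ⟨fun i ↦ ∑ j, B i j, fun i ↦ finset_sum_mul_self Finset.univ (B i),
    fun i k ↦ finset_sum_mul_le_sum_mul_sum Finset.univ (B i) (B k)⟩

theorem exists_lower_triangular_column [Finite ι] [Preorder ι] {A : Matrix ι ι L} {i : ι}
    {s : L} (hs : s * s = A i i) (hAs : ∀ k, A i k ≤ s)
    (hdet : ∀ k l, i ≤ k → i ≤ l → A i k * A i l ≤ A i i * A k l) :
    ∃ c : ι → L, (∀ k < i, c k = 0) ∧ (∀ k l, c k * c l ≤ A k l) ∧
      ∀ k, i ≤ k → A i k ≤ c i * c k := by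
  classical
  cases nonempty_fintype ι
  choose x hx using fun k ↦ le_iff_dvd.1 (hAs k)
  have hred : ∀ k ∈ Finset.univ.filter (i ≤ ·), ∀ l ∈ Finset.univ.filter (i ≤ ·),
      s * (x k * x l) ≤ s * A k l := by
    simp only [Finset.mem_filter_univ]
    intro k hk l hl
    apply le_of_mul_le_mul_left_of_le (mul_le_left s _)
    calc s * (s * (x k * x l)) = A i k * A i l := by rw [hx k, hx l]; ring
      _ ≤ A i i * A k l := hdet k l hk hl
      _ = s * (s * A k l) := by rw [← hs, mul_assoc]
  obtain ⟨w, hsw, hw⟩ := exists_mul_eq_and_mul_mul_le _ hred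
  simp only [Finset.mem_filter_univ] at hsw hw
  have hswA (k : ι) (hk : i ≤ k) : s * w k = A i k := by rw [hsw k hk, ← hx]
  have hsi : s ≤ w i := le_of_mul_le_mul_left_of_le le_rfl (by rw [hswA i le_rfl, hs])
  refine ⟨fun k ↦ if i ≤ k then w k else 0, fun k hk ↦ if_neg hk.not_ge, fun k l ↦ ?_,
    fun k hk ↦ ?_⟩
  · dsimp only
    split_ifs with hk hl
    · exact hw k hk l hl
    all_goals simp only [mul_zero, zero_mul, zero_le]
  · simp only [le_refl, if_true, if_pos hk, ← hswA k hk]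
    exact mul_le_mul_left hsi _

theorem stmt_13_general [Fintype ι] [LinearOrder ι] [Fintype κ] {A : Matrix ι ι L}
    {B : Matrix ι κ L} (hAB : A = B * Bᵀ)
    (hright : ∀ i k l : ι, i < k → i < l → k ≠ l → A i l * A k i ≤ A i i * A k l) :
    ∃ C : Matrix ι ι L, (∀ i j : ι, i < j → C i j = 0) ∧ A = C * Cᵀ := by
  have hsymm : A.IsSymm := by rw [Matrix.IsSymm, hAB, transpose_mul, transpose_transpose]
  obtain ⟨s, hs, hAs⟩ := hAB ▸ exists_mul_self_eq_diag_and_le_mul B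
  have hdet (i k l : ι) (hik : i ≤ k) (hil : i ≤ l) : A i k * A i l ≤ A i i * A k l := by
    rcases hik.eq_or_lt with rfl | hik
    · rfl
    rcases hil.eq_or_lt with rfl | hil
    · rw [mul_comm, hsymm.apply i k]
    rcases eq_or_ne k l with rfl | hkl
    · calc A i k * A i k ≤ s i * s k * (s i * s k) := mul_le_mul' (hAs i k) (hAs i k)
        _ = A i i * A k k := by rw [mul_mul_mul_comm, hs, hs]
    · rw [mul_comm, ← hsymm.apply i k]
      exact hright i k l hik hil hkl
  choose c hzero hle hdiag using fun i ↦
    exists_lower_triangular_column (hs i) (fun k ↦ (hAs i k).trans (mul_le_left _ _)) (hdet i)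
  exact ⟨(of c)ᵀ, fun i j ↦ hzero j i,
    eq_mul_transpose_of_le_diag_mul hsymm (fun k l i ↦ hle i k l) hdiag⟩

end Matrix

/-- (Incline Markham theorem, LU version) If `A` is an n×n
completely positive matrix over a normal incline all of whose right almost
principal 2×2 submatrices have `det⁺ ≥ det⁻`, then `A` is LU-completely
positive. -/
theorem stmt_13 {L : Type*} [CommSemiring L]
    (hidem : ∀ a : L, a + a = a)
    (habs : ∀ a b : L, a + a * b = a)
    (hLI : ∀ x y : L, x + y = y → ∃ z : L, x = y * z)
    (hsq : ∀ x : L, ∃! c : L, c * c = x)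
    (hAG : ∀ x y : L, x * y + (x * x + y * y) = x * x + y * y)
    (n : ℕ) (A : Matrix (Fin n) (Fin n) L)
    (hcp : ∃ m : ℕ, ∃ B : Matrix (Fin n) (Fin m) L, A = B * Bᵀ)
    (hright : ∀ i k l : Fin n, i < k → i < l → k ≠ l →
      A i l * A k i + A i i * A k l = A i i * A k l) :
    ∃ C : Matrix (Fin n) (Fin n) L, (∀ i j : Fin n, i < j → C i j = 0) ∧
      A = C * Cᵀ := by
  let _ : IdemCommSemiring L := { IdemSemiring.ofSemiring hidem, ‹CommSemiring L› with }
  have : IsSqrtUniqueIncline L :=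
    { le_iff_dvd := ⟨hLI _ _, by rintro ⟨z, rfl⟩; exact (add_comm _ _).trans (habs _ z)⟩
      eq_of_mul_self_eq_mul_self := fun h ↦ (hsq _).unique h rfl }
  obtain ⟨m, B, hAB⟩ := hcp
  exact stmt_13_general hAB hright
end

section
/- Let L be a normal incline and let A be an n×n symmetric TN₂ matrix over L, i.e., Aᵀ = A and for all indices i < k and j < l one has A i l * A k j ≤ A i j * A k l (every 2×2 submatrix has its positive determinant greater than or equal to its negative determinant). Then A is both LU-completely positive and UL-completely positive: there exist an n×n lower triangular matrix C over L with A = C * Cᵀ and an n×n upper triangular matrix U over L with A = U * Uᵀ. -/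
open Matrix

/-!
The `k`-th column of the lower triangular factor is obtained by dividing column `k` of `A` by the
square root `s` of the pivot `A k k`, as in the Cholesky algorithm. The difficulty is that `L` has
no cancellation: `TN₂` only gives `s² yᵢ yⱼ ≤ s² aᵢⱼ` for quotients `yᵢ` of `aᵢₖ` by `s`, whereas
`yᵢ yⱼ ≤ aᵢⱼ` is needed. Unique square roots repair this. If `s² b ≤ s² a`, then some `r` with
`b r ≤ a` fixes `s² b` multiplicatively, and a factor `r` fixing a product `u v` dominates a product
`q q'` with `q` fixing `u` and `q'` fixing `v`. Multiplying each `yᵢ` by all the factors obtained in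
this way changes no `s yᵢ` and enforces all the required inequalities. Once the pivot column is
divided correctly no elimination step is left, because addition is a supremum.
The upper triangular factor comes from reversing the order of the indices.
-/

open Function

theorem mul_eq_left_of_mul_self_mul_eq_left {M : Type*} [CommSemigroup M]
    (hsq : Bijective fun x : M ↦ x * x) {a r : M} (h : a * a * r = a * a) : a * r = a := by
  obtain ⟨ρ, rfl⟩ := hsq.surjective r
  have hρ : a * ρ = a := hsq.injective <| by simpa only [mul_mul_mul_comm] using h
  rw [← mul_assoc, hρ, hρ]

/-- An incline with the LI-property. The absorption law says that multiples of `y` lie below `y`,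
and the LI-property is the converse, so together they say that the order is reverse divisibility. -/
class LIIncline (L : Type*) [IdemCommSemiring L] : Prop where
  le_iff_dvd : ∀ {x y : L}, x ≤ y ↔ y ∣ x

namespace LIIncline

variable {L : Type*} [IdemCommSemiring L] [LIIncline L]

theorem mul_le_left (a b : L) : a * b ≤ a :=
  le_iff_dvd.2 (dvd_mul_right a b)

theorem mul_le_right (a b : L) : a * b ≤ b :=
  le_iff_dvd.2 (dvd_mul_left b a)

theorem le_of_mul_self_le_mul_self (hsq : Bijective fun x : L ↦ x * x) {x y : L}
    (h : x * x ≤ y * y) : x ≤ y := by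
  obtain ⟨w, hw⟩ := le_iff_dvd.1 h
  obtain ⟨t, rfl⟩ := hsq.surjective w
  have hx : x = y * t := hsq.injective <| by simpa only [mul_mul_mul_comm] using hw
  exact hx ▸ mul_le_left y t

theorem exists_mul_eq_left_mul_le_of_mul_le_mul {a b c : L} (h : c * b ≤ c * a) :
    ∃ r, c * b * r = c * b ∧ b * r ≤ a := by
  obtain ⟨r, hr⟩ := le_iff_dvd.1 (le_add_self : a ≤ b + a)
  obtain ⟨t, ht⟩ := le_iff_dvd.1 (le_self_add : b ≤ b + a)
  have hfix : c * (b + a) * r = c * (b + a) := by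
    rw [mul_assoc, ← hr, mul_add, add_eq_right_iff_le.2 h]
  refine ⟨r, ?_, ?_⟩
  · calc c * b * r = c * ((b + a) * t) * r := by rw [← ht]
      _ = c * (b + a) * r * t := by ring
      _ = c * ((b + a) * t) := by rw [hfix, mul_assoc]
      _ = c * b := by rw [← ht]
  · calc b * r ≤ (b + a) * r := by gcongr; exact le_self_add
      _ = a := hr.symm

theorem exists_mul_add_eq_left_of_mul_mul_eq_left (hsq : Bijective fun x : L ↦ x * x) {u v r : L}
    (h : u * v * r = u * v) : ∃ z, v * z * r = v * z ∧ u * (z + r) = u := by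
  obtain ⟨z, hz⟩ := le_iff_dvd.1 (le_self_add : u ≤ u + v)
  have hvzu : v * z ≤ u := by
    calc v * z ≤ (u + v) * z := by gcongr; exact le_add_self
      _ = u := hz.symm
  obtain ⟨t, ht⟩ := le_iff_dvd.1 hvzu
  have hvz : v * z * r = v * z := mul_eq_left_of_mul_self_mul_eq_left hsq <| by
    calc v * z * (v * z) * r = u * t * (v * z) * r := by rw [← ht]
      _ = u * v * r * (t * z) := by ring
      _ = u * t * (v * z) := by rw [h]; ring
      _ = v * z * (v * z) := by rw [← ht]
  refine ⟨z, hvz, (mul_le_left _ _).antisymm ?_⟩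
  calc u = u * z + v * z * r := by rw [hvz, ← add_mul, ← hz]
    _ ≤ u * z + u * r := by gcongr
    _ = u * (z + r) := (mul_add u z r).symm

theorem exists_mul_eq_left_mul_le_of_mul_mul_eq_left (hsq : Bijective fun x : L ↦ x * x) {u v r : L}
    (h : u * v * r = u * v) : ∃ q q', u * q = u ∧ v * q' = v ∧ q * q' ≤ r := by
  obtain ⟨z, hz, hu⟩ := exists_mul_add_eq_left_of_mul_mul_eq_left hsq h
  obtain ⟨z', hz', hv⟩ := exists_mul_add_eq_left_of_mul_mul_eq_left hsq hz
  refine ⟨z + r, z' + r, hu, hv, ?_⟩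
  calc (z + r) * (z' + r) = z * z' * r + z * r + r * (z' + r) := by rw [hz']; ring
    _ ≤ r := add_le (add_le (mul_le_right _ _) (mul_le_right _ _)) (mul_le_left _ _)

theorem exists_mul_eq_left_mul_mul_le_of_mul_mul_le (hsq : Bijective fun x : L ↦ x * x)
    {s y z a : L} (h : s * y * (s * z) ≤ s * s * a) :
    ∃ q q', s * y * q = s * y ∧ s * z * q' = s * z ∧ y * q * (z * q') ≤ a := by
  rw [mul_mul_mul_comm] at h
  obtain ⟨r, hr, hra⟩ := exists_mul_eq_left_mul_le_of_mul_le_mul h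
  rw [mul_mul_mul_comm] at hr
  obtain ⟨q, q', hq, hq', hqr⟩ := exists_mul_eq_left_mul_le_of_mul_mul_eq_left hsq hr
  refine ⟨q, q', hq, hq', ?_⟩
  calc y * q * (z * q') = y * z * (q * q') := mul_mul_mul_comm ..
    _ ≤ y * z * r := by gcongr
    _ ≤ a := hra

theorem exists_quotients_mul_le (hsq : Bijective fun x : L ↦ x * x) {ι : Type*} [Finite ι] {s : L}
    {x : ι → L} {a : ι → ι → L} (hx : ∀ i, x i ≤ s) (h : ∀ i j, x i * x j ≤ s * s * a i j) :
    ∃ z : ι → L, (∀ i, s * z i = x i) ∧ ∀ i j, z i * z j ≤ a i j := by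
  cases nonempty_fintype ι
  choose y hy using fun i ↦ le_iff_dvd.1 (hx i)
  simp only [hy] at h ⊢
  choose q q' hq hq' hle using fun i j ↦ exists_mul_eq_left_mul_mul_le_of_mul_mul_le hsq (h i j)
  let p (i : ι) : L := ∏ j, q i j * q' j i
  have hfix (i) : s * y i * p i = s * y i :=
    Finset.prod_induction _ (fun t ↦ s * y i * t = s * y i)
      (fun t t' ht ht' ↦ by rw [← mul_assoc, ht, ht']) (mul_one _)
      fun j _ ↦ by rw [← mul_assoc, hq, hq']
  have hp (i j) : p i ≤ q i j * q' j i :=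
    le_iff_dvd.2 (Finset.dvd_prod_of_mem (fun j ↦ q i j * q' j i) (Finset.mem_univ j))
  refine ⟨fun i ↦ y i * p i, fun i ↦ by rw [← mul_assoc, hfix], fun i j ↦ ?_⟩
  calc y i * p i * (y j * p j) ≤ y i * q i j * (y j * q' i j) := by
        gcongr
        · exact (hp i j).trans (mul_le_left _ _)
        · exact (hp j i).trans (mul_le_right _ _)
    _ ≤ a i j := hle i j

end LIIncline

/-- A `TN₂` matrix: in every `2 × 2` submatrix the positive part of the determinant dominates the
negative part. -/
def IsTN₂ {m n R : Type*} [Preorder m] [Preorder n] [Mul R] [LE R] (A : Matrix m n R) : Prop :=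
  ∀ ⦃i k : m⦄ ⦃j l : n⦄, i < k → j < l → A i l * A k j ≤ A i j * A k l

namespace IsTN₂

theorem mul_le_mul_of_le {m n R : Type*} [PartialOrder m] [PartialOrder n] [CommMagma R]
    [Preorder R] {A : Matrix m n R} (hA : IsTN₂ A) {i k : m} {j l : n} (hik : i ≤ k) (hjl : j ≤ l) :
    A i l * A k j ≤ A i j * A k l := by
  rcases hik.eq_or_lt with rfl | hik
  · exact (mul_comm _ _).le
  rcases hjl.eq_or_lt with rfl | hjl
  · exact le_rfl
  · exact hA hik hjl

theorem orderDual {m n R : Type*} [Preorder m] [Preorder n] [CommMagma R] [LE R]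
    {A : Matrix m n R} (hA : IsTN₂ A) : IsTN₂ (m := mᵒᵈ) (n := nᵒᵈ) A := by
  intro i k j l hki hlj
  rw [mul_comm (A i l), mul_comm (A i j)]
  exact hA hki hlj

end IsTN₂

/-- `A` is LU-completely positive: `A = C * Cᵀ` with `C` lower triangular. -/
def IsLUCompletelyPositive {ι R : Type*} [Fintype ι] [LT ι] [NonUnitalNonAssocSemiring R]
    (A : Matrix ι ι R) : Prop :=
  ∃ C : Matrix ι ι R, C.IsLowerTriangular ∧ A = C * Cᵀ

/-- `A` is UL-completely positive: `A = U * Uᵀ` with `U` upper triangular. -/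
def IsULCompletelyPositive {ι R : Type*} [Fintype ι] [LT ι] [NonUnitalNonAssocSemiring R]
    (A : Matrix ι ι R) : Prop :=
  ∃ U : Matrix ι ι R, U.IsUpperTriangular ∧ A = U * Uᵀ

section Factorization

variable {ι L : Type*} [LinearOrder ι] [IdemCommSemiring L] {A : Matrix ι ι L}

theorem eq_mul_transpose_of_pivot_mul_eq [Fintype ι] {C : Matrix ι ι L} (hA : A.IsSymm)
    (hpivot : ∀ i k, k ≤ i → C k k * C i k = A i k) (hle : ∀ i j k, C i k * C j k ≤ A i j) :
    A = C * Cᵀ := by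
  have hterm (i j k) : C i k * C j k ≤ (C * Cᵀ) i j :=
    Finset.single_le_sum_of_canonicallyOrdered (f := fun k ↦ C i k * C j k) (Finset.mem_univ k)
  ext i j
  refine le_antisymm ?_ (Finset.sum_induction _ (· ≤ A i j) (fun _ _ ↦ add_le) zero_le
    fun k _ ↦ hle i j k)
  rcases le_total i j with hij | hji
  · calc A i j = C i i * C j i := by rw [hpivot j i hij, hA.apply]
      _ ≤ (C * Cᵀ) i j := hterm i j i
  · calc A i j = C i j * C j j := by rw [mul_comm, hpivot i j hji]
      _ ≤ (C * Cᵀ) i j := hterm i j j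

theorem IsTN₂.exists_factor_column [Finite ι] [LIIncline L] (hA : IsTN₂ A) (hsymm : A.IsSymm)
    (hsq : Bijective fun x : L ↦ x * x) (k : ι) :
    ∃ c : ι → L, (∀ i, i < k → c i = 0) ∧ (∀ i, k ≤ i → c k * c i = A i k) ∧
      ∀ i j, c i * c j ≤ A i j := by
  obtain ⟨s, hs : s * s = A k k⟩ := hsq.surjective (A k k)
  have hpivot (i j) (hi : k ≤ i) (hj : k ≤ j) : A i k * A j k ≤ s * s * A i j := by
    rw [hs, mul_comm, ← hsymm.apply j k]
    exact hA.mul_le_mul_of_le hi hj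
  have hcol (i) (hi : k ≤ i) : A i k ≤ s :=
    LIIncline.le_of_mul_self_le_mul_self hsq <| (hpivot i i hi hi).trans (LIIncline.mul_le_left _ _)
  obtain ⟨z, hz, hzA⟩ := LIIncline.exists_quotients_mul_le hsq (ι := Set.Ici k)
    (x := fun i ↦ A i k) (a := fun i j ↦ A i j) (fun i ↦ hcol i i.2)
    fun i j ↦ hpivot i j i.2 j.2
  have hzk : z ⟨k, le_rfl⟩ = s := by
    obtain ⟨t, ht⟩ := LIIncline.le_iff_dvd.1 <|
      LIIncline.le_of_mul_self_le_mul_self hsq <| (hzA ⟨k, le_rfl⟩ ⟨k, le_rfl⟩).trans hs.ge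
    rw [ht]
    refine mul_eq_left_of_mul_self_mul_eq_left hsq ?_
    rw [mul_assoc, ← ht, hz, hs]
  refine ⟨fun i ↦ if hi : k ≤ i then z ⟨i, hi⟩ else 0, fun i hi ↦ dif_neg hi.not_ge,
    fun i hi ↦ ?_, fun i j ↦ ?_⟩
  · simp only [dif_pos le_rfl, dif_pos hi, hzk, hz]
  · dsimp only
    split_ifs with hi hj
    · exact hzA ⟨i, hi⟩ ⟨j, hj⟩
    all_goals simp

variable [Fintype ι] [LIIncline L]

theorem IsTN₂.isLUCompletelyPositive (hA : IsTN₂ A) (hsymm : A.IsSymm)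
    (hsq : Bijective fun x : L ↦ x * x) : IsLUCompletelyPositive A := by
  choose c hzero hpivot hle using hA.exists_factor_column hsymm hsq
  exact ⟨of fun i k ↦ c k i, fun i k hik ↦ hzero k i hik, eq_mul_transpose_of_pivot_mul_eq hsymm
    (fun i k ↦ hpivot k i) fun i j k ↦ hle k i j⟩

theorem IsTN₂.isULCompletelyPositive (hA : IsTN₂ A) (hsymm : A.IsSymm)
    (hsq : Bijective fun x : L ↦ x * x) : IsULCompletelyPositive A :=
  hA.orderDual.isLUCompletelyPositive (ι := ιᵒᵈ) hsymm hsq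

end Factorization

/-- Every square symmetric TN₂ matrix over a normal incline is
both LU-completely positive and UL-completely positive. -/
theorem stmt_17 {L : Type*} [CommSemiring L]
    (hidem : ∀ a : L, a + a = a)
    (habs : ∀ a b : L, a + a * b = a)
    (hLI : ∀ x y : L, x + y = y → ∃ z : L, x = y * z)
    (hsq : ∀ x : L, ∃! c : L, c * c = x)
    (hAG : ∀ x y : L, x * y + (x * x + y * y) = x * x + y * y)
    (n : ℕ) (A : Matrix (Fin n) (Fin n) L) (hsymm : Aᵀ = A)
    (hTN2 : ∀ i k j l : Fin n, i < k → j < l →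
      A i l * A k j + A i j * A k l = A i j * A k l) :
    (∃ C : Matrix (Fin n) (Fin n) L, (∀ i j : Fin n, i < j → C i j = 0) ∧
        A = C * Cᵀ) ∧
    (∃ U : Matrix (Fin n) (Fin n) L, (∀ i j : Fin n, j < i → U i j = 0) ∧
        A = U * Uᵀ) := by
  let : IdemCommSemiring L := { ‹CommSemiring L›, IdemSemiring.ofSemiring hidem with }
  have : LIIncline L := ⟨fun {x y} ↦ by
    rw [← add_eq_right_iff_le]
    exact ⟨hLI x y, by rintro ⟨z, rfl⟩; rw [add_comm, habs]⟩⟩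
  have hA : IsTN₂ A := fun i k j l hik hjl ↦ add_eq_right_iff_le.1 (hTN2 i k j l hik hjl)
  have hbij : Bijective fun x : L ↦ x * x := (bijective_iff_existsUnique _).2 hsq
  obtain ⟨C, hC, hCA⟩ := hA.isLUCompletelyPositive hsymm hbij
  obtain ⟨U, hU, hUA⟩ := hA.isULCompletelyPositive hsymm hbij
  exact ⟨⟨C, fun i j hij ↦ hC hij, hCA⟩, ⟨U, fun i j hji ↦ hU hji, hUA⟩⟩
end
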